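/- arXiv:2011.08938 — 3 statements merged into one kernel-verified Lean document; each statement's English description precedes it below -/
import Mathlib

section
/- Let m ≥ n ≥ 2 be integers and let a_{ij} denote the (i,j) entry of the inverse of the adjacency matrix A(B_{m,n}) (which is invertible). Then: (i) a_{ij} = −(m+n−4)/(m+n−3) whenever 1 ≤ i = j ≤ m−1 or m+2 ≤ i = j ≤ m+n; (ii) a_{ij} = 1/(m+n−3) whenever i ≠ j and both i, j lie in {1, …, m−1}, or i ≠ j and both i, j lie in {m+2, …, m+n}; (iii) a_{ij} = −1/(m+n−3) whenever one of i, j lies in {1, …, m−1} and the other lies in {m+2, …, m+n}. -/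
/-- The complete bridge graph `B_{m,n}` on vertex set `Fin (m+n)` (0-indexed version of the
paper's `{1, …, m+n}`): vertices `0, …, m-1` form a complete graph `K_m`, vertices
`m, …, m+n-1` form a complete graph `K_n`, and the only further edge is the bridge joining
vertex `m-1` (the paper's vertex `m`) to vertex `m` (the paper's vertex `m+1`). -/
def bridgeGraph (m n : ℕ) : SimpleGraph (Fin (m + n)) :=
  SimpleGraph.fromRel (fun i j =>
    ((i : ℕ) < m ∧ (j : ℕ) < m) ∨ (m ≤ (i : ℕ) ∧ m ≤ (j : ℕ)) ∨
      ((i : ℕ) + 1 = m ∧ (j : ℕ) = m))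

instance (m n : ℕ) : DecidableRel (bridgeGraph m n).Adj := fun i j =>
  decidable_of_iff (i ≠ j ∧
      ((((i : ℕ) < m ∧ (j : ℕ) < m) ∨ (m ≤ (i : ℕ) ∧ m ≤ (j : ℕ)) ∨
        ((i : ℕ) + 1 = m ∧ (j : ℕ) = m)) ∨
       (((j : ℕ) < m ∧ (i : ℕ) < m) ∨ (m ≤ (j : ℕ) ∧ m ≤ (i : ℕ)) ∨
        ((j : ℕ) + 1 = m ∧ (i : ℕ) = m)))) Iff.rfl

/-- Entries of the adjacency matrix, as a function of the values of the indices. -/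
theorem adj_entry (m n : ℕ) (i j : Fin (m + n)) :
    (bridgeGraph m n).adjMatrix ℝ i j =
      if (i : ℕ) ≠ (j : ℕ) ∧ (((i : ℕ) < m ∧ (j : ℕ) < m) ∨ (m ≤ (i : ℕ) ∧ m ≤ (j : ℕ)) ∨
        ((i : ℕ) + 1 = m ∧ (j : ℕ) = m) ∨ ((j : ℕ) + 1 = m ∧ (i : ℕ) = m)) then 1 else 0 := by
  rw [SimpleGraph.adjMatrix_apply]
  refine if_congr ?_ rfl rfl
  rw [bridgeGraph, SimpleGraph.fromRel_adj, Ne, Fin.ext_iff]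
  grind

/-- The candidate inverse for `m = p + 1`, `n = q + 1`, with `d = p + q - 1`. -/
noncomputable def candE (p q : ℕ) (i j : ℕ) : ℝ :=
  if i < p then
    if j < p then 1 / ((p : ℝ) + q - 1) - (if i = j then 1 else 0)
    else if j = p then q / ((p : ℝ) + q - 1)
    else if j = p + 1 then (q - 1) / ((p : ℝ) + q - 1)
    else -(1 / ((p : ℝ) + q - 1))
  else if i = p then
    if j < p then q / ((p : ℝ) + q - 1)
    else if j = p then (1 - p) * q / ((p : ℝ) + q - 1)
    else if j = p + 1 then (1 - p) * (q - 1) / ((p : ℝ) + q - 1)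
    else (p - 1) / ((p : ℝ) + q - 1)
  else if i = p + 1 then
    if j < p then (q - 1) / ((p : ℝ) + q - 1)
    else if j = p then (1 - p) * (q - 1) / ((p : ℝ) + q - 1)
    else if j = p + 1 then (1 - q) * p / ((p : ℝ) + q - 1)
    else p / ((p : ℝ) + q - 1)
  else
    if j < p then -(1 / ((p : ℝ) + q - 1))
    else if j = p then (p - 1) / ((p : ℝ) + q - 1)
    else if j = p + 1 then p / ((p : ℝ) + q - 1)
    else 1 / ((p : ℝ) + q - 1) - (if i = j then 1 else 0)

/-- Value of the row sum of `A` against a function of the index. -/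
theorem row_sum (p q : ℕ) (f : ℕ → ℝ) (i : Fin (p + 1 + (q + 1))) :
    ∑ k : Fin (p + 1 + (q + 1)), (bridgeGraph (p + 1) (q + 1)).adjMatrix ℝ i k * f k =
      if (i : ℕ) < p then (∑ k : Fin p, f k) + f p - f i
      else if (i : ℕ) = p then (∑ k : Fin p, f k) + f (p + 1)
      else if (i : ℕ) = p + 1 then f p + ∑ k : Fin q, f (p + 2 + k)
      else f (p + 1) + (∑ k : Fin q, f (p + 2 + k)) - f i := by
  have key : ∀ (r : ℕ) (g : ℕ → ℝ) (t : ℕ), t < r →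
      ∑ k : Fin r, (if t = (k : ℕ) then 0 else g k) = (∑ k : Fin r, g k) - g t := by
    intro r g t ht
    rw [eq_sub_iff_add_eq]
    have : g t = ∑ k : Fin r, (if (⟨t, ht⟩ : Fin r) = k then g k else 0) := by simp
    rw [this, ← Finset.sum_add_distrib]
    refine Finset.sum_congr rfl fun k _ => ?_
    by_cases h : t = (k : ℕ) <;> simp [h, Fin.ext_iff]
  have hi := i.isLt
  simp only [adj_entry, Fin.sum_univ_add, Fin.sum_univ_castSucc (n := p),
    Fin.sum_univ_succ (n := q), Fin.val_castAdd, Fin.val_natAdd, Fin.val_castSucc, Fin.val_last,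
    Fin.val_zero, Fin.val_succ, ite_mul, one_mul, zero_mul]
  generalize (i : ℕ) = i at *
  have e : ∀ k : ℕ, p + 1 + (k + 1) = p + 2 + k := fun k => by omega
  simp only [e, add_zero]
  have h1 : ∑ k : Fin p, (if i ≠ (k : ℕ) ∧ (i < p + 1 ∧ (k : ℕ) < p + 1 ∨
      p + 1 ≤ i ∧ p + 1 ≤ (k : ℕ) ∨ i + 1 = p + 1 ∧ (k : ℕ) = p + 1 ∨
      (k : ℕ) + 1 = p + 1 ∧ i = p + 1) then f k else 0) =
      if i < p then (∑ k : Fin p, f k) - f i else if i = p then ∑ k : Fin p, f k else 0 := by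
    split_ifs with a b
    · rw [← key p f i a]
      refine Finset.sum_congr rfl fun k _ => ?_
      have := k.isLt
      grind
    · refine Finset.sum_congr rfl fun k _ => ?_
      have := k.isLt
      grind
    · refine Finset.sum_eq_zero fun k _ => ?_
      have := k.isLt
      grind
  have h2 : ∑ k : Fin q, (if i ≠ p + 2 + (k : ℕ) ∧ (i < p + 1 ∧ p + 2 + (k : ℕ) < p + 1 ∨
      p + 1 ≤ i ∧ p + 1 ≤ p + 2 + (k : ℕ) ∨ i + 1 = p + 1 ∧ p + 2 + (k : ℕ) = p + 1 ∨
      p + 2 + (k : ℕ) + 1 = p + 1 ∧ i = p + 1) then f (p + 2 + k) else 0) =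
      if i < p + 1 then 0 else if i = p + 1 then ∑ k : Fin q, f (p + 2 + k)
      else (∑ k : Fin q, f (p + 2 + k)) - f i := by
    split_ifs with a b
    · refine Finset.sum_eq_zero fun k _ => ?_
      have := k.isLt
      grind
    · refine Finset.sum_congr rfl fun k _ => ?_
      have := k.isLt
      grind
    · obtain ⟨t, rfl⟩ : ∃ t, i = p + 2 + t := ⟨i - (p + 2), by omega⟩
      rw [← key q (fun k => f (p + 2 + k)) t (by omega)]
      refine Finset.sum_congr rfl fun k _ => ?_
      have := k.isLt
      grind
  rw [h1, h2]
  rcases lt_trichotomy i p with h | h | h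
  · grind
  · grind
  · rcases eq_or_lt_of_le (Nat.succ_le_of_lt h) with h' | h' <;> grind

theorem sumL (p q : ℕ) (j : ℕ) :
    ∑ k : Fin p, candE p q k j =
      if j < p then p / ((p : ℝ) + q - 1) - 1
      else if j = p then p * (q / ((p : ℝ) + q - 1))
      else if j = p + 1 then p * ((q - 1) / ((p : ℝ) + q - 1))
      else -(p / ((p : ℝ) + q - 1)) := by
  have : ∀ k : Fin p, candE p q k j = if j < p then
      1 / ((p : ℝ) + q - 1) - (if (k : ℕ) = j then 1 else 0)
    else if j = p then q / ((p : ℝ) + q - 1)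
    else if j = p + 1 then (q - 1) / ((p : ℝ) + q - 1)
    else -(1 / ((p : ℝ) + q - 1)) := fun k => by simp [candE]
  simp only [this]
  split_ifs with h
  · have h1 : ∑ k : Fin p, (if (k : ℕ) = j then (1 : ℝ) else 0) = 1 := by
      have : ∀ k : Fin p, ((k : ℕ) = j) = (k = ⟨j, h⟩) := fun k => by simp [Fin.ext_iff]
      simp [this]
    rw [Finset.sum_sub_distrib, h1]
    simp [div_eq_mul_inv]
  all_goals simp [div_eq_mul_inv]

theorem sumR (p q : ℕ) (j : ℕ) (hj : j < p + 1 + (q + 1)) :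
    ∑ k : Fin q, candE p q (p + 2 + k) j =
      if j < p then -(q / ((p : ℝ) + q - 1))
      else if j = p then q * ((p - 1) / ((p : ℝ) + q - 1))
      else if j = p + 1 then q * (p / ((p : ℝ) + q - 1))
      else q / ((p : ℝ) + q - 1) - 1 := by
  have : ∀ k : Fin q, candE p q (p + 2 + k) j =
    if j < p then -(1 / ((p : ℝ) + q - 1))
    else if j = p then (p - 1) / ((p : ℝ) + q - 1)
    else if j = p + 1 then p / ((p : ℝ) + q - 1)
    else 1 / ((p : ℝ) + q - 1) - (if p + 2 + (k : ℕ) = j then 1 else 0) := fun k => by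
      rw [candE, if_neg (by omega), if_neg (by omega), if_neg (by omega)]
  simp only [this]
  split_ifs with h h' h''
  · simp [div_eq_mul_inv]
  · simp [div_eq_mul_inv]
  · simp [div_eq_mul_inv]
  · have h1 : ∑ k : Fin q, (if p + 2 + (k : ℕ) = j then (1 : ℝ) else 0) = 1 := by
      have : ∀ k : Fin q, (p + 2 + (k : ℕ) = j) = (k = ⟨j - (p + 2), by omega⟩) := fun k => by
        simp only [Fin.ext_iff, eq_iff_iff]; omega
      simp [this]
    rw [Finset.sum_sub_distrib, h1]
    simp [div_eq_mul_inv]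

theorem adj_mul_cand (p q : ℕ) (hp : 1 ≤ p) (hq : 1 ≤ q) :
    (bridgeGraph (p + 1) (q + 1)).adjMatrix ℝ *
      Matrix.of (fun i j : Fin (p + 1 + (q + 1)) => candE p q i j) = 1 := by
  have hd : (p : ℝ) + q - 1 ≠ 0 := by
    have h1 : (1 : ℝ) ≤ p := by exact_mod_cast hp
    have h2 : (1 : ℝ) ≤ q := by exact_mod_cast hq
    intro h
    linarith
  ext i j
  rw [Matrix.mul_apply]
  simp only [Matrix.of_apply]
  rw [row_sum p q (fun k => candE p q k j) i, sumL, sumR p q j j.isLt, Matrix.one_apply]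
  simp only [Fin.ext_iff]
  have hi := i.isLt
  have hj := j.isLt
  generalize (i : ℕ) = i at *
  generalize (j : ℕ) = j at *
  have ci : i < p ∨ i = p ∨ i = p + 1 ∨ p + 1 < i := by omega
  have cj : j < p ∨ j = p ∨ j = p + 1 ∨ p + 1 < j := by omega
  by_cases hij : i = j
  · subst hij
    rcases ci with h | h | h | h
    · simp [candE, h, h.ne]
      field_simp
      ring
    · simp [candE, h]
      field_simp
      ring
    · simp [candE, h]
      field_simp
      ring
    · have a1 : ¬ i < p := by omega
      have a2 : i ≠ p := by omega
      have a3 : i ≠ p + 1 := by omega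
      simp [candE, a1, a2, a3]
      field_simp
      ring
  · rw [if_neg hij]
    rcases ci with h | h | h | h <;> rcases cj with h' | h' | h' | h' <;>
    · first
        | have a1 : ¬ i < p := by omega
          have a2 : i ≠ p := by omega
          have a3 : i ≠ p + 1 := by omega
          first
            | have b1 : ¬ j < p := by omega
              have b2 : j ≠ p := by omega
              have b3 : j ≠ p + 1 := by omega
              simp [candE, a1, a2, a3, b1, b2, b3, hij]
              try field_simp
              try ring
              done
            | simp [candE, a1, a2, a3, h', hij]
              try field_simp
              try ring
              done
        | have b1 : ¬ j < p := by omega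
          have b2 : j ≠ p := by omega
          have b3 : j ≠ p + 1 := by omega
          simp [candE, h, b1, b2, b3, hij]
          try field_simp
          try ring
          done
        | simp [candE, h, h', hij]
          try field_simp
          try ring
          done
        | omega

/-- Let `m ≥ n ≥ 2`. Then `A(B_{m,n})` is invertible, and writing `a_{ij}`
for the entries of its inverse (with the paper's 1-indexed vertices `1, …, m+n` corresponding
to `Fin (m+n)`, so that a paper index `p` corresponds to the Lean index with value `p - 1`):
(i) `a_{ij} = −(m+n−4)/(m+n−3)` on the diagonal positions with paper index in
`{1, …, m−1}` (Lean: `i+2 ≤ m`) or in `{m+2, …, m+n}` (Lean: `m+1 ≤ i`);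
(ii) `a_{ij} = 1/(m+n−3)` for off-diagonal positions with both indices in `{1, …, m−1}`
or both in `{m+2, …, m+n}`;
(iii) `a_{ij} = −1/(m+n−3)` when one index is in `{1, …, m−1}` and the other in
`{m+2, …, m+n}`. -/
theorem inv_adjMatrix_bridgeGraph_entries (m n : ℕ) (hn : 2 ≤ n) (hnm : n ≤ m) :
    IsUnit ((bridgeGraph m n).adjMatrix ℝ).det ∧
    (∀ i j : Fin (m + n), i = j → ((i : ℕ) + 2 ≤ m ∨ m + 1 ≤ (i : ℕ)) →
      ((bridgeGraph m n).adjMatrix ℝ)⁻¹ i j =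
        -(((m : ℝ) + (n : ℝ) - 4) / ((m : ℝ) + (n : ℝ) - 3))) ∧
    (∀ i j : Fin (m + n), i ≠ j →
      (((i : ℕ) + 2 ≤ m ∧ (j : ℕ) + 2 ≤ m) ∨ (m + 1 ≤ (i : ℕ) ∧ m + 1 ≤ (j : ℕ))) →
      ((bridgeGraph m n).adjMatrix ℝ)⁻¹ i j = 1 / ((m : ℝ) + (n : ℝ) - 3)) ∧
    (∀ i j : Fin (m + n),
      (((i : ℕ) + 2 ≤ m ∧ m + 1 ≤ (j : ℕ)) ∨ (m + 1 ≤ (i : ℕ) ∧ (j : ℕ) + 2 ≤ m)) →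
      ((bridgeGraph m n).adjMatrix ℝ)⁻¹ i j = -(1 / ((m : ℝ) + (n : ℝ) - 3))) := by
  obtain ⟨p, rfl⟩ : ∃ p, m = p + 1 := ⟨m - 1, by omega⟩
  obtain ⟨q, rfl⟩ : ∃ q, n = q + 1 := ⟨n - 1, by omega⟩
  have hp : 1 ≤ p := by omega
  have hq : 1 ≤ q := by omega
  have hAB := adj_mul_cand p q hp hq
  have hd : (p : ℝ) + q - 1 ≠ 0 := by
    have h1 : (1 : ℝ) ≤ p := by exact_mod_cast hp
    have h2 : (1 : ℝ) ≤ q := by exact_mod_cast hq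
    intro h
    linarith
  have e3 : ((p + 1 : ℕ) : ℝ) + ((q + 1 : ℕ) : ℝ) - 3 = (p : ℝ) + q - 1 := by push_cast; ring
  have e4 : ((p + 1 : ℕ) : ℝ) + ((q + 1 : ℕ) : ℝ) - 4 = (p : ℝ) + q - 1 - 1 := by
    push_cast; ring
  rw [Matrix.inv_eq_right_inv hAB, e3, e4]
  refine ⟨Matrix.isUnit_det_of_right_inverse hAB, ?_, ?_, ?_⟩
  · rintro i j rfl h
    rw [Matrix.of_apply]
    have : candE p q i i = 1 / ((p : ℝ) + q - 1) - 1 := by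
      rw [candE]; grind
    rw [this]
    field_simp
    ring
  · intro i j hij h
    rw [Matrix.of_apply]
    rw [Ne, Fin.ext_iff] at hij
    rw [candE]; grind
  · intro i j h
    rw [Matrix.of_apply]
    rw [candE]; grind
end

section
/- For every integer m > 2, the number m − 2 is an eigenvalue of the adjacency matrix A(B_{m,m−1}), and it is the second largest eigenvalue: exactly one eigenvalue of A(B_{m,m−1}), counted with multiplicity, is strictly greater than m − 2. -/
open Matrix in
lemma bridge_aux_card {N : ℕ} (A : Matrix (Fin N) (Fin N) ℝ) (hA : A.IsHermitian) (t : ℝ)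
    (b : Fin N) (h1 : ∀ x : Fin N → ℝ, x b = 0 → x ⬝ᵥ (A *ᵥ x) ≤ t * (x ⬝ᵥ x))
    (h2 : ∃ x : Fin N → ℝ, t * (x ⬝ᵥ x) < x ⬝ᵥ (A *ᵥ x)) :
    (A.charpoly.roots.filter (fun x => t < x)).card = 1 := by
  classical
  set e : Fin N → (Fin N → ℝ) := fun i => (hA.eigenvectorBasis i).ofLp with he
  have hAe : ∀ i, A *ᵥ e i = hA.eigenvalues i • e i := fun i => hA.mulVec_eigenvectorBasis i
  have hort : ∀ i j, e i ⬝ᵥ e j = if i = j then 1 else 0 := by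
    intro i j
    have := orthonormal_iff_ite.1 hA.eigenvectorBasis.orthonormal j i
    rw [EuclideanSpace.inner_eq_star_dotProduct] at this
    simpa [he, eq_comm] using this
  have hexp : ∀ x y : Fin N → ℝ, x ⬝ᵥ y = ∑ i, (e i ⬝ᵥ x) * (e i ⬝ᵥ y) := by
    intro x y
    have := hA.eigenvectorBasis.sum_inner_mul_inner (WithLp.toLp 2 x) (WithLp.toLp 2 y)
    simp only [EuclideanSpace.inner_eq_star_dotProduct] at this
    simp only [star_trivial] at this
    rw [dotProduct_comm, ← this]
    refine Finset.sum_congr rfl fun i _ => ?_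
    rw [dotProduct_comm y]
  have hsym : ∀ x y : Fin N → ℝ, x ⬝ᵥ (A *ᵥ y) = (A *ᵥ x) ⬝ᵥ y := by
    intro x y
    have hT : Aᵀ = A := by
      rw [← conjTranspose_eq_transpose_of_trivial]
      exact hA
    rw [dotProduct_mulVec, ← mulVec_transpose, hT]
  rw [hA.roots_charpoly_eq_eigenvalues, Multiset.filter_map, Multiset.card_map]
  change (Finset.univ.filter (fun i => t < hA.eigenvalues i)).card = 1
  apply le_antisymm
  · rw [Finset.card_le_one]
    intro i hi j hj
    simp only [Finset.mem_filter, Finset.mem_univ, true_and] at hi hj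
    by_contra hij
    have hii := hort i i
    have hjj := hort j j
    have hij' := hort i j
    have hji' := hort j i
    rw [if_pos rfl] at hii hjj
    rw [if_neg hij] at hij'
    rw [if_neg (Ne.symm hij)] at hji'
    by_cases hb : e i b = 0
    · have := h1 (e i) hb
      rw [hAe, dotProduct_smul, hii, smul_eq_mul] at this
      linarith
    · have := h1 (e j b • e i - e i b • e j) (by simp; ring)
      simp only [mulVec_sub, mulVec_smul, hAe, dotProduct_sub, sub_dotProduct, dotProduct_smul,
        smul_dotProduct, hii, hjj, hij', hji', smul_eq_mul] at this
      have hp : 0 < (e i b) ^ 2 := by positivity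
      nlinarith [mul_pos hp (sub_pos.2 hj), mul_nonneg (sq_nonneg (e j b)) (sub_pos.2 hi).le]
  · rw [Nat.one_le_iff_ne_zero, Ne, Finset.card_eq_zero, Finset.filter_eq_empty_iff]
    intro hall
    obtain ⟨x, hx⟩ := h2
    apply absurd hx
    rw [not_lt, hexp x (A *ᵥ x), hexp x x, Finset.mul_sum]
    refine Finset.sum_le_sum fun i _ => ?_
    rw [hsym (e i), hAe, smul_dotProduct, smul_eq_mul]
    have := not_lt.1 (hall (Finset.mem_univ i))
    nlinarith [mul_nonneg (sub_nonneg.2 this) (sq_nonneg (e i ⬝ᵥ x))]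

open Matrix in
lemma bridge_aux_row1 (k : ℕ) (x : Fin (k + 1 + k) → ℝ) (hk : 0 < k) (i : Fin (k + 1)) :
    (((bridgeGraph (k + 1) k).adjMatrix ℝ) *ᵥ x) (Fin.castAdd k i) =
      (∑ j, x (Fin.castAdd k j)) - x (Fin.castAdd k i) +
        (if i = Fin.last k then x (Fin.natAdd (k + 1) ⟨0, hk⟩) else 0) := by
  rw [mulVec, dotProduct, Fin.sum_univ_add]
  have e1 : ∀ j : Fin (k + 1), (bridgeGraph (k + 1) k).adjMatrix ℝ (Fin.castAdd k i)
      (Fin.castAdd k j) = 1 - if j = i then 1 else 0 := by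
    intro j
    have : (bridgeGraph (k + 1) k).Adj (Fin.castAdd k i) (Fin.castAdd k j) ↔ ¬ j = i := by
      simp [bridgeGraph, Fin.ext_iff, eq_comm]
      omega
    rw [SimpleGraph.adjMatrix_apply]
    simp only [this]
    split_ifs <;> simp
  have e2 : ∀ j : Fin k, (bridgeGraph (k + 1) k).adjMatrix ℝ (Fin.castAdd k i)
      (Fin.natAdd (k + 1) j) = if j = ⟨0, hk⟩ then (if i = Fin.last k then 1 else 0) else 0 := by
    intro j
    have : (bridgeGraph (k + 1) k).Adj (Fin.castAdd k i) (Fin.natAdd (k + 1) j) ↔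
        (j = ⟨0, hk⟩ ∧ i = Fin.last k) := by
      simp [bridgeGraph, Fin.ext_iff]
      omega
    rw [SimpleGraph.adjMatrix_apply]
    simp only [this, ite_and]
  simp only [e1, e2, sub_mul, one_mul, ite_mul, zero_mul, Finset.sum_sub_distrib,
    Finset.sum_ite_eq', Finset.mem_univ, if_true]

open Matrix in
lemma bridge_aux_row2 (k : ℕ) (x : Fin (k + 1 + k) → ℝ) (hk : 0 < k) (i : Fin k) :
    (((bridgeGraph (k + 1) k).adjMatrix ℝ) *ᵥ x) (Fin.natAdd (k + 1) i) =
      (∑ j, x (Fin.natAdd (k + 1) j)) - x (Fin.natAdd (k + 1) i) +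
        (if i = ⟨0, hk⟩ then x (Fin.castAdd k (Fin.last k)) else 0) := by
  rw [mulVec, dotProduct, Fin.sum_univ_add, add_comm]
  have e1 : ∀ j : Fin k, (bridgeGraph (k + 1) k).adjMatrix ℝ (Fin.natAdd (k + 1) i)
      (Fin.natAdd (k + 1) j) = 1 - if j = i then 1 else 0 := by
    intro j
    have : (bridgeGraph (k + 1) k).Adj (Fin.natAdd (k + 1) i) (Fin.natAdd (k + 1) j) ↔
        ¬ j = i := by
      simp [bridgeGraph, Fin.ext_iff, eq_comm]
      try omega
    rw [SimpleGraph.adjMatrix_apply]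
    simp only [this]
    split_ifs <;> simp
  have e2 : ∀ j : Fin (k + 1), (bridgeGraph (k + 1) k).adjMatrix ℝ (Fin.natAdd (k + 1) i)
      (Fin.castAdd k j) = if j = Fin.last k then (if i = ⟨0, hk⟩ then 1 else 0) else 0 := by
    intro j
    have : (bridgeGraph (k + 1) k).Adj (Fin.natAdd (k + 1) i) (Fin.castAdd k j) ↔
        (j = Fin.last k ∧ i = ⟨0, hk⟩) := by
      simp [bridgeGraph, Fin.ext_iff]
      omega
    rw [SimpleGraph.adjMatrix_apply]
    simp only [this, ite_and]
  simp only [e1, e2, sub_mul, one_mul, ite_mul, zero_mul, Finset.sum_sub_distrib,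
    Finset.sum_ite_eq', Finset.mem_univ, if_true]

open Matrix in
lemma bridge_aux_form (k : ℕ) (x : Fin (k + 1 + k) → ℝ) (hk : 0 < k) :
    x ⬝ᵥ (((bridgeGraph (k + 1) k).adjMatrix ℝ) *ᵥ x) =
      (∑ j, x (Fin.castAdd k j)) ^ 2 - (∑ j, x (Fin.castAdd k j) ^ 2) +
      ((∑ j, x (Fin.natAdd (k + 1) j)) ^ 2 - (∑ j, x (Fin.natAdd (k + 1) j) ^ 2)) +
      2 * (x (Fin.castAdd k (Fin.last k)) * x (Fin.natAdd (k + 1) ⟨0, hk⟩)) := by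
  rw [dotProduct, Fin.sum_univ_add]
  simp only [bridge_aux_row1 k x hk, bridge_aux_row2 k x hk, mul_add, mul_sub, mul_ite, mul_zero,
    Finset.sum_add_distrib, Finset.sum_sub_distrib, Finset.sum_ite_eq', Finset.mem_univ, if_true,
    ← Finset.sum_mul, ← pow_two]
  ring

open Matrix in
lemma bridge_aux_main (k : ℕ) (hk : 0 < k) :
    ((bridgeGraph (k + 1) k).adjMatrix ℝ).charpoly.IsRoot ((k : ℝ) - 1) ∧
    (((bridgeGraph (k + 1) k).adjMatrix ℝ).charpoly.roots.filter
      (fun x => (k : ℝ) - 1 < x)).card = 1 := by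
  constructor
  · rw [Polynomial.IsRoot, eval_charpoly, ← exists_mulVec_eq_zero_iff]
    refine ⟨Fin.append (fun i : Fin (k + 1) => if i = Fin.last k then 0 else 1)
      (fun _ : Fin k => -(k : ℝ)), ?_, ?_⟩
    · intro h
      have := congrFun h (Fin.natAdd (k + 1) ⟨0, hk⟩)
      rw [Fin.append_right, Pi.zero_apply, neg_eq_zero, Nat.cast_eq_zero] at this
      omega
    · have hs : ∑ i : Fin (k + 1), (if i = Fin.last k then (0 : ℝ) else 1) = k := by
        rw [Fin.sum_univ_castSucc]
        simp [Fin.ext_iff, Fin.is_lt, ne_of_lt]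
      rw [sub_mulVec]
      ext i
      rw [Pi.sub_apply, scalar_apply, mulVec_diagonal]
      refine Fin.addCases (fun i => ?_) (fun i => ?_) i
      · rw [bridge_aux_row1 k _ hk]
        simp only [Fin.append_left, Fin.append_right, hs]
        split_ifs <;> simp
      · rw [bridge_aux_row2 k _ hk]
        simp only [Fin.append_left, Fin.append_right]
        simp
        ring
  · refine bridge_aux_card _ ?_ _ (Fin.castAdd k (Fin.last k)) ?_ ?_
    · rw [IsHermitian, conjTranspose_eq_transpose_of_trivial]
      exact SimpleGraph.transpose_adjMatrix ..
    · intro x hx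
      rw [bridge_aux_form k x hk, hx, dotProduct, Fin.sum_univ_add (fun i => x i * x i)]
      have c2 := Finset.sum_mul_sq_le_sq_mul_sq Finset.univ (fun _ => (1 : ℝ))
        (fun j : Fin k => x (Fin.natAdd (k + 1) j))
      have c1 := Finset.sum_mul_sq_le_sq_mul_sq Finset.univ (fun _ => (1 : ℝ))
        (fun j : Fin k => x (Fin.castAdd k j.castSucc))
      simp only [Fin.sum_univ_castSucc (n := k), hx, ← pow_two]
      simp at c1 c2
      nlinarith
    · refine ⟨Fin.append (fun _ => 1) (fun _ => 0), ?_⟩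
      rw [bridge_aux_form k _ hk, dotProduct, Fin.sum_univ_add]
      simp only [Fin.append_left, Fin.append_right]
      simp
      nlinarith

theorem second_largest_eigenvalue_bridgeGraph (m : ℕ) (hm : 2 < m) :
    ((bridgeGraph m (m - 1)).adjMatrix ℝ).charpoly.IsRoot ((m : ℝ) - 2) ∧
    (((bridgeGraph m (m - 1)).adjMatrix ℝ).charpoly.roots.filter
      (fun x => (m : ℝ) - 2 < x)).card = 1 := by
  obtain ⟨k, rfl⟩ : ∃ k, m = k + 1 := ⟨m - 1, by omega⟩
  have h := bridge_aux_main k (by omega)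
  have e : ((k + 1 : ℕ) : ℝ) - 2 = (k : ℝ) - 1 := by push_cast; ring
  rw [e]
  exact h
end

section
/- For every integer m > 2, the cubic x³ + (3−m)x² + (2−2m)x − 2 has three real roots θ₁ > θ₂ > θ₃ satisfying θ₁ > m−2 > 0 > θ₂ > −1 > θ₃, and the multiset of eigenvalues of the adjacency matrix A(B_{m,m−1}), counted with multiplicity, consists of θ₁, m−2, θ₂ and θ₃ each once, together with −1 with multiplicity 2m−5. -/
open Polynomial Matrix in
theorem bridge_aux_charpoly (m : ℕ) (hm : 2 < m) (x : ℝ) :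
    ((bridgeGraph m (m - 1)).adjMatrix ℝ).charpoly.eval x =
      (x + 1) ^ (2 * m - 5) * ((x - ((m : ℝ) - 2)) *
        (x ^ 3 + (3 - (m : ℝ)) * x ^ 2 + (2 - 2 * (m : ℝ)) * x - 2)) := by
  let u : Fin 4 → ℕ → ℝ := ![fun i => if i < m then 1 else 0, fun i => if m ≤ i then 1 else 0,
    fun i => if i = m - 1 then 1 else 0, fun i => if i = m then 1 else 0]
  let v : Fin 4 → ℕ → ℝ := ![fun i => if i < m then 1 else 0, fun i => if m ≤ i then 1 else 0,
    fun i => if i = m then 1 else 0, fun i => if i = m - 1 then 1 else 0]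
  let U : Matrix (Fin (m + (m - 1))) (Fin 4) ℝ := Matrix.of fun i a => u a i
  let V : Matrix (Fin 4) (Fin (m + (m - 1))) ℝ := Matrix.of fun a i => v a i
  have hA : (bridgeGraph m (m - 1)).adjMatrix ℝ = U * V - Matrix.scalar _ 1 := by
    ext i j
    have e : (i = j) = ((i : ℕ) = j) := by rw [Fin.ext_iff]
    have hadj : (bridgeGraph m (m - 1)).Adj i j ↔ (i : ℕ) ≠ j ∧
        ((((i : ℕ) < m ∧ (j : ℕ) < m) ∨ (m ≤ (i : ℕ) ∧ m ≤ (j : ℕ)) ∨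
          ((i : ℕ) + 1 = m ∧ (j : ℕ) = m)) ∨
         (((j : ℕ) < m ∧ (i : ℕ) < m) ∨ (m ≤ (j : ℕ) ∧ m ≤ (i : ℕ)) ∨
          ((j : ℕ) + 1 = m ∧ (i : ℕ) = m))) := by
      rw [bridgeGraph, SimpleGraph.fromRel_adj, ne_eq, e]
    rw [SimpleGraph.adjMatrix_apply, if_congr hadj rfl rfl]
    clear hadj
    simp only [Matrix.sub_apply,
      Matrix.mul_apply, Fin.sum_univ_four, Matrix.scalar_apply, Matrix.diagonal_apply, U, V, u, v,
      Matrix.of_apply, ne_eq, e]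
    simp [-not_and, -not_or]
    generalize (i : ℕ) = a
    generalize (j : ℕ) = b
    clear e U V u v
    split_ifs <;> first | (exfalso; omega) | norm_num
  have hn : ((m - 1 : ℕ) : ℝ) = m - 1 := by push_cast [show 1 ≤ m by omega]; ring
  have hVU : V * U = !![(m : ℝ), 0, 1, 0; 0, m - 1, 0, 1; 0, 1, 0, 1; 1, 0, 1, 0] := by
    have key : ∀ a b, (V * U) a b = ∑ i ∈ Finset.range (m + (m - 1)), v a i * u b i := by
      intro a b
      rw [Finset.sum_range]; rfl
    have s1 : ∑ i ∈ Finset.range (m + (m - 1)), (if i < m then (1 : ℝ) else 0) = m := by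
      rw [Finset.sum_range_add]
      simp [Finset.sum_ite]
      rw [Finset.filter_true_of_mem (by simp)]; simp
    have s2 : ∑ i ∈ Finset.range (m + (m - 1)), (if m ≤ i then (1 : ℝ) else 0) = m - 1 := by
      rw [Finset.sum_range_add]
      simp [Finset.sum_ite, hn]
    have s0 : ∑ i ∈ Finset.range (m + (m - 1)), (0 : ℝ) = 0 := by simp
    have s3 : ∑ i ∈ Finset.range (m + (m - 1)), (if i = m then (1 : ℝ) else 0) = 1 := by
      rw [Finset.sum_ite_eq', if_pos (by rw [Finset.mem_range]; omega)]
    have s4 : ∑ i ∈ Finset.range (m + (m - 1)), (if i = m - 1 then (1 : ℝ) else 0) = 1 := by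
      rw [Finset.sum_ite_eq', if_pos (by rw [Finset.mem_range]; omega)]
    ext a b
    rw [key]
    fin_cases a <;> fin_cases b <;>
      first
      | (refine (Finset.sum_congr rfl (fun i _ => ?_)).trans s0; clear hA key s0 s1 s2 s3 s4 U V;
         simp [u, v] <;> clear u v <;>
         first | omega | (split_ifs <;> first | (exfalso; omega) | norm_num; done); done)
      | (refine (Finset.sum_congr rfl (fun i _ => ?_)).trans s1; clear hA key s0 s1 s2 s3 s4 U V;
         simp [u, v] <;> clear u v <;>
         first | omega | (split_ifs <;> first | (exfalso; omega) | norm_num; done); done)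
      | (refine (Finset.sum_congr rfl (fun i _ => ?_)).trans s2; clear hA key s0 s1 s2 s3 s4 U V;
         simp [u, v] <;> clear u v <;>
         first | omega | (split_ifs <;> first | (exfalso; omega) | norm_num; done); done)
      | (refine (Finset.sum_congr rfl (fun i _ => ?_)).trans s3; clear hA key s0 s1 s2 s3 s4 U V;
         simp [u, v] <;> clear u v <;>
         first | omega | (split_ifs <;> first | (exfalso; omega) | norm_num; done); done)
      | (refine (Finset.sum_congr rfl (fun i _ => ?_)).trans s4; clear hA key s0 s1 s2 s3 s4 U V;
         simp [u, v] <;> clear u v <;>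
         first | omega | (split_ifs <;> first | (exfalso; omega) | norm_num; done); done)
  rw [hA, Matrix.charpoly_sub_scalar, Matrix.charpoly_mul_comm_of_le _ _ (by simp; omega), hVU]
  simp only [Fintype.card_fin, eval_comp, eval_mul, eval_pow, eval_X, eval_add, eval_C,
    show m + (m - 1) - 4 = 2 * m - 5 by omega, Matrix.eval_charpoly]
  congr 1
  simp [Matrix.det_succ_row_zero, Fin.sum_univ_succ, Fin.succAbove, Matrix.submatrix, Matrix.scalar_apply, Matrix.diagonal_apply]
  ring

theorem bridge_aux_roots (m : ℕ) (hm : 2 < m) :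
    ∃ θ₁ θ₂ θ₃ : ℝ,
      (∀ x : ℝ, x ^ 3 + (3 - (m : ℝ)) * x ^ 2 + (2 - 2 * (m : ℝ)) * x - 2 =
        (x - θ₁) * (x - θ₂) * (x - θ₃)) ∧
      (m : ℝ) - 2 < θ₁ ∧ (0 : ℝ) < (m : ℝ) - 2 ∧ θ₂ < 0 ∧ -1 < θ₂ ∧ θ₃ < -1 := by
  have hm' : (2 : ℝ) < m := by exact_mod_cast hm
  generalize (m : ℝ) = c at *
  let f : ℝ → ℝ := fun x => x ^ 3 + (3 - c) * x ^ 2 + (2 - 2 * c) * x - 2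
  have hf : Continuous f := by fun_prop
  obtain ⟨a, ⟨ha1, ha2⟩, ha⟩ := intermediate_value_Ioo (show c - 2 ≤ c by linarith) hf.continuousOn
    (show (0 : ℝ) ∈ Set.Ioo (f (c - 2)) (f c) by constructor <;> simp only [f] <;> nlinarith)
  obtain ⟨b, ⟨hb1, hb2⟩, hb⟩ := intermediate_value_Ioo' (show (-1 : ℝ) ≤ 0 by linarith) hf.continuousOn
    (show (0 : ℝ) ∈ Set.Ioo (f 0) (f (-1)) by constructor <;> simp only [f] <;> nlinarith)
  obtain ⟨d, ⟨hd1, hd2⟩, hd⟩ := intermediate_value_Ioo (show (-2 : ℝ) ≤ -1 by linarith) hf.continuousOn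
    (show (0 : ℝ) ∈ Set.Ioo (f (-2)) (f (-1)) by constructor <;> simp only [f] <;> nlinarith)
  refine ⟨a, b, d, ?_, ha1, by linarith, hb2, hb1, hd2⟩
  simp only [f] at ha hb hd
  have q1 : a ^ 2 + a * b + b ^ 2 + (3 - c) * (a + b) + (2 - 2 * c) = 0 := by
    apply mul_left_cancel₀ (show a - b ≠ 0 by intro h; linarith)
    linear_combination ha - hb
  have q2 : a ^ 2 + a * d + d ^ 2 + (3 - c) * (a + d) + (2 - 2 * c) = 0 := by
    apply mul_left_cancel₀ (show a - d ≠ 0 by intro h; linarith)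
    linear_combination ha - hd
  have q3 : a + b + d + (3 - c) = 0 := by
    apply mul_left_cancel₀ (show b - d ≠ 0 by intro h; linarith)
    linear_combination q1 - q2
  intro x
  have hc : c = a + b + d + 3 := by linarith
  subst hc
  linear_combination ha + (x - a) * q1

/-- For every integer `m > 2`, the cubic `x³ + (3−m)x² + (2−2m)x − 2` has
three real roots `θ₁ > θ₂ > θ₃` satisfying `θ₁ > m−2 > 0 > θ₂ > −1 > θ₃`, and the multiset of
eigenvalues of `A(B_{m,m−1})`, counted with multiplicity (i.e. the multiset of roots of the
characteristic polynomial), consists of `θ₁`, `m−2`, `θ₂` and `θ₃` each once, together with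
`−1` with multiplicity `2m−5`. -/
theorem spectrum_bridgeGraph (m : ℕ) (hm : 2 < m) :
    ∃ θ₁ θ₂ θ₃ : ℝ,
      (∀ x : ℝ, x ^ 3 + (3 - (m : ℝ)) * x ^ 2 + (2 - 2 * (m : ℝ)) * x - 2 =
        (x - θ₁) * (x - θ₂) * (x - θ₃)) ∧
      (m : ℝ) - 2 < θ₁ ∧ (0 : ℝ) < (m : ℝ) - 2 ∧ θ₂ < 0 ∧ -1 < θ₂ ∧ θ₃ < -1 ∧
      ((bridgeGraph m (m - 1)).adjMatrix ℝ).charpoly.roots =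
        θ₁ ::ₘ ((m : ℝ) - 2) ::ₘ θ₂ ::ₘ θ₃ ::ₘ Multiset.replicate (2 * m - 5) (-1) := by
  obtain ⟨θ₁, θ₂, θ₃, h, h1, h2, h3, h4, h5⟩ := bridge_aux_roots m hm
  refine ⟨θ₁, θ₂, θ₃, h, h1, h2, h3, h4, h5, ?_⟩
  rw [← Polynomial.roots_multiset_prod_X_sub_C
    (θ₁ ::ₘ ((m : ℝ) - 2) ::ₘ θ₂ ::ₘ θ₃ ::ₘ Multiset.replicate (2 * m - 5) (-1))]
  congr 1
  apply Polynomial.funext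
  intro x
  rw [bridge_aux_charpoly m hm, h]
  simp only [Multiset.map_cons, Multiset.map_replicate, Multiset.prod_cons,
    Multiset.prod_replicate, Polynomial.eval_mul, Polynomial.eval_pow, Polynomial.eval_sub,
    Polynomial.eval_X, Polynomial.eval_C]
  ring
end
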